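/- Let q = p^h be a prime power and let f(X,Y) = Σ_{i,j} a_{i,j} X^i Y^j ∈ F_q[X,Y] have total degree d ≥ 1 and a_{0,0} = 0. Let j̄ = max{ j : a_{i,j} ≠ 0 for some i }. If j̄ > 1, then the hypersurface S_f contains an absolutely irreducible component defined over F_q; that is, there is a nonconstant polynomial g ∈ F_q[X_0,X_1,X_2,X_3,X_4] dividing F that remains irreducible over the algebraic closure of F_q. -/

import Mathlib

open MvPolynomial

/-- The coefficient `a_{i,j}` of the monomial `X^i Y^j` in `f ∈ F_q[X,Y]`. -/
noncomputable def coeffXY {K : Type*} [Field K] (f : MvPolynomial (Fin 2) K) (i j : ℕ) : K :=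
  f.coeff (Finsupp.single (0 : Fin 2) i + Finsupp.single (1 : Fin 2) j)

/-- The homogeneous polynomial
`F = (X₂ − X₄)² X₀^{d−1} + (X₁ − X₃)·Σ_{i,j} a_{i,j}(X₁^i X₂^j − X₃^i X₄^j) X₀^{d−i−j}`
defining the hypersurface `S_f ⊂ PG(4,q)`. -/
noncomputable def Fpoly {K : Type*} [Field K] (f : MvPolynomial (Fin 2) K) (d : ℕ) :
    MvPolynomial (Fin 5) K :=
  (X 2 - X 4) ^ 2 * (X 0) ^ (d - 1)
    + (X 1 - X 3) *
      ∑ m ∈ f.support,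
        C (f.coeff m) *
          ((X 1) ^ (m 0) * (X 2) ^ (m 1) - (X 3) ^ (m 0) * (X 4) ^ (m 1))
          * (X 0) ^ (d - m 0 - m 1)

/-- `S_f` contains an absolutely irreducible component defined over the base field: there is a
nonconstant polynomial `g` over the base field dividing `F` that remains irreducible over the
algebraic closure. -/
def HasAbsIrrComponent {K : Type*} [Field K] (F : MvPolynomial (Fin 5) K) : Prop :=
  ∃ g : MvPolynomial (Fin 5) K, g ∣ F ∧ 0 < g.totalDegree ∧
    Irreducible (MvPolynomial.map (algebraMap K (AlgebraicClosure K)) g)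

section UniqueFactor

variable {A B : Type*} [CommRing A] [UniqueFactorizationMonoid A] [CommRing B]

/-- If a prime divides the image of `F` under a multiplicative map, it divides the image of some
irreducible factor of `F`. -/
theorem exists_irreducible_dvd_of_prime_dvd_map (τ : A →* B) {π : B} (hπ : Prime π) {F : A}
    (hF : F ≠ 0) (h : π ∣ τ F) : ∃ P, Irreducible P ∧ P ∣ F ∧ π ∣ τ P := by
  obtain ⟨s, hs, hsF⟩ := WfDvdMonoid.exists_factors F hF
  have h' : π ∣ (s.map τ).prod := by
    rw [← map_multiset_prod]
    exact h.trans (hsF.map τ).symm.dvd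
  obtain ⟨b, hb, hπb⟩ := hπ.exists_mem_multiset_dvd h'
  obtain ⟨P, hP, rfl⟩ := Multiset.mem_map.1 hb
  exact ⟨P, hs P hP, (Multiset.dvd_prod hP).trans hsF.dvd, hπb⟩

/-- If the image of `F` under a multiplicative map is not divisible by `π²`, then at most one
irreducible factor of `F` has image divisible by `π`. -/
theorem associated_of_dvd_map_of_not_sq_dvd (τ : A →* B) {π : B} {F P Q : A}
    (h : ¬ π * π ∣ τ F) (hP : Irreducible P) (hQ : Irreducible Q) (hPF : P ∣ F) (hQF : Q ∣ F)
    (hπP : π ∣ τ P) (hπQ : π ∣ τ Q) : Associated P Q := by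
  by_contra hne
  obtain ⟨c, rfl⟩ := hPF
  have hQc : Q ∣ c := (hQ.prime.dvd_or_dvd hQF).resolve_left
    fun hQP => hne (hQ.associated_of_dvd hP hQP).symm
  obtain ⟨e, rfl⟩ := hQc
  rw [map_mul, map_mul, ← mul_assoc] at h
  exact h ((mul_dvd_mul hπP hπQ).mul_right _)

end UniqueFactor

section GaloisDescent

variable {σ K L : Type*} [Field K] [Field L] [Algebra K L] [IsGalois K L]

/-- A polynomial over a Galois extension fixed by the Galois group comes from the base field. -/
theorem mem_range_map_of_forall_map_eq {P : MvPolynomial σ L}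
    (h : ∀ s : Gal(L/K), map (s : L →+* L) P = P) :
    P ∈ Set.range (map (σ := σ) (algebraMap K L)) := by
  rw [mem_range_map_iff_coeffs_subset]
  intro a ha
  obtain ⟨m, -, rfl⟩ := mem_coeffs_iff.1 ha
  rw [InfiniteGalois.mem_range_algebraMap_iff_fixed]
  intro s
  conv_rhs => rw [← h s]
  simp [coeff_map]

/-- An irreducible factor of `F` which is associated to all its Galois conjugates comes from a
factor of `F` over the base field. -/
theorem exists_dvd_irreducible_map_of_forall_associated {F : MvPolynomial σ K}
    {P : MvPolynomial σ L} (hP : Irreducible P)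
    (hPF : P ∣ map (algebraMap K L) F)
    (h : ∀ s : Gal(L/K), Associated P (map (s : L →+* L) P)) :
    ∃ g : MvPolynomial σ K, g ∣ F ∧ Irreducible (map (algebraMap K L) g) := by
  obtain ⟨m, hm⟩ := ne_zero_iff.1 hP.ne_zero
  have hu : IsUnit (C (coeff m P)⁻¹ : MvPolynomial σ L) :=
    (IsUnit.mk0 _ (inv_ne_zero hm)).map C
  have hN : Associated P (C (coeff m P)⁻¹ * P) := ⟨hu.unit, mul_comm _ _⟩
  have hN1 : coeff m (C (coeff m P)⁻¹ * P) = 1 := by simp [coeff_C_mul, hm]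
  generalize C (coeff m P)⁻¹ * P = N at hN hN1
  have hNirr : Irreducible N := hN.irreducible hP
  have hNF : N ∣ map (algebraMap K L) F := hN.symm.dvd.trans hPF
  have hNfix : ∀ s : Gal(L/K), map (s : L →+* L) N = N := by
    intro s
    obtain ⟨u, hu⟩ := hN.symm.trans ((h s).trans (hN.map (map (s : L →+* L))))
    obtain ⟨r, -, hr⟩ := isUnit_iff_eq_C_of_isReduced.1 u.isUnit
    have hr1 : r = 1 := by
      have := congrArg (coeff m) hu
      rwa [hr, mul_comm, coeff_C_mul, coeff_map, hN1, mul_one, map_one] at this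
    rw [← hu, hr, hr1, C_1, mul_one]
  obtain ⟨Q, hQ⟩ := hNF
  have hQfix : ∀ s : Gal(L/K), map (s : L →+* L) Q = Q := by
    intro s
    have hFs : map (s : L →+* L) (map (algebraMap K L) F) = map (algebraMap K L) F := by
      rw [map_map]
      congr 1
      exact congrArg map (RingHom.ext fun x => s.commutes x)
    apply mul_left_cancel₀ hNirr.ne_zero
    conv_lhs => rw [← hNfix s]
    rw [← map_mul, ← hQ, hFs]
  obtain ⟨g, rfl⟩ := mem_range_map_of_forall_map_eq hNfix
  obtain ⟨k, rfl⟩ := mem_range_map_of_forall_map_eq hQfix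
  refine ⟨g, ⟨k, ?_⟩, hNirr⟩
  apply map_injective _ (algebraMap K L).injective
  rw [hQ, map_mul]

end GaloisDescent

section WeightedLeadingForm

variable {σ L : Type*} [Field L]

/-- The substitution `X i ↦ X i * t ^ w i`. -/
noncomputable def weightScale (w : σ → ℕ) :
    MvPolynomial σ L →+* Polynomial (MvPolynomial σ L) :=
  eval₂Hom (Polynomial.C.comp C) fun i => Polynomial.C (X i) * Polynomial.X ^ w i

/-- The component of highest weight, where `X i` has weight `w i`. -/
noncomputable def weightedLeadingForm (w : σ → ℕ) : MvPolynomial σ L →* MvPolynomial σ L :=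
  (Polynomial.leadingCoeffHom (R := MvPolynomial σ L)).comp
    (weightScale w).toMonoidHom

theorem weightedLeadingForm_apply (w : σ → ℕ) (P : MvPolynomial σ L) :
    weightedLeadingForm w P = (weightScale w P).leadingCoeff := rfl

theorem weightScale_C (w : σ → ℕ) (a : L) :
    weightScale w (C a : MvPolynomial σ L) = Polynomial.C (C a) := by
  simp [weightScale]

theorem weightScale_X (w : σ → ℕ) (i : σ) :
    weightScale w (X i : MvPolynomial σ L) = Polynomial.C (X i) * Polynomial.X ^ w i := by
  simp [weightScale]

theorem weightedLeadingForm_map (w : σ → ℕ) (s : L →+* L) (P : MvPolynomial σ L) :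
    weightedLeadingForm w (map s P) = map s (weightedLeadingForm w P) := by
  have h : (weightScale w).comp (map (σ := σ) s) =
      (Polynomial.mapRingHom (map (σ := σ) s)).comp (weightScale w) := by
    apply MvPolynomial.ringHom_ext
    · simp [weightScale_C]
    · simp [weightScale_X]
  rw [weightedLeadingForm_apply, weightedLeadingForm_apply,
    ← Polynomial.leadingCoeff_map_of_injective (map_injective s s.injective)]
  exact congrArg Polynomial.leadingCoeff (RingHom.congr_fun h P)

end WeightedLeadingForm

theorem prime_X_sub_X {σ L : Type*} [Field L] {i j : σ} (hij : i ≠ j) :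
    Prime (X i - X j : MvPolynomial σ L) := by
  classical
  have hc : coeff (Finsupp.single i 1) (X i - X j : MvPolynomial σ L) = 1 := by
    simp [coeff_X, Finsupp.single_left_inj, hij.symm]
  refine (irreducible_of_totalDegree_eq_one ?_ fun x hx => ?_).prime
  · refine ((isHomogeneous_X L i).sub (isHomogeneous_X L j)).totalDegree fun h0 => ?_
    simp [h0] at hc
  · exact isUnit_of_dvd_one (hc ▸ hx (Finsupp.single i 1))

/-- The coordinates `X₁, X₃` have weight `1` and `X₂, X₄` have weight `N`. -/
def yHeavyWeight (N : ℕ) : Fin 5 → ℕ := ![0, 1, N, 1, N]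

/-- The summand of `Fpoly f d` coming from the monomial `m` of `f`. -/
noncomputable def fpolyTerm {K L : Type*} [Field K] [Field L] [Algebra K L]
    (f : MvPolynomial (Fin 2) K) (d : ℕ) (m : Fin 2 →₀ ℕ) : MvPolynomial (Fin 5) L :=
  (X 1 - X 3) * (C (algebraMap K L (f.coeff m)) *
    ((X 1) ^ (m 0) * (X 2) ^ (m 1) - (X 3) ^ (m 0) * (X 4) ^ (m 1)) * (X 0) ^ (d - m 0 - m 1))

section Fpoly

variable {K L : Type*} [Field K] [Field L] [Algebra K L]

theorem weightScale_map_Fpoly (f : MvPolynomial (Fin 2) K) (d N : ℕ) :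
    weightScale (yHeavyWeight N) (map (algebraMap K L) (Fpoly f d)) =
      Polynomial.C ((X 2 - X 4) ^ 2 * (X 0) ^ (d - 1)) * Polynomial.X ^ (2 * N) +
        ∑ m ∈ f.support, Polynomial.C (fpolyTerm f d m) * Polynomial.X ^ (1 + m 0 + N * m 1) := by
  simp only [Fpoly, fpolyTerm, map_add, map_mul, map_sub, map_pow, map_sum, map_X, map_C,
    weightScale_X, weightScale_C, yHeavyWeight, Finset.mul_sum]
  refine congrArg₂ (· + ·) ?_ ?_
  · simp
    ring
  · refine Finset.sum_congr rfl fun m _ => ?_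
    simp
    ring

theorem not_X_sub_X_sq_dvd_fpolyTerm {f : MvPolynomial (Fin 2) K} (d : ℕ) {m : Fin 2 →₀ ℕ}
    (hm : f.coeff m ≠ 0) (hm1 : m 1 ≠ 0) :
    ¬ (X 1 - X 3) * (X 1 - X 3) ∣ (fpolyTerm f d m : MvPolynomial (Fin 5) L) := by
  intro h
  have h' := (mul_dvd_mul_iff_left (prime_X_sub_X (by decide)).ne_zero).1 h
  have := map_dvd (eval (![1, 1, 1, 1, 0] : Fin 5 → L)) h'
  simp [hm1, hm] at this

/-- The summand of heaviest monomial is the weighted leading form of `Fpoly f d`. -/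
theorem weightedLeadingForm_map_Fpoly {f : MvPolynomial (Fin 2) K} {d N : ℕ} {m : Fin 2 →₀ ℕ}
    (hm : m ∈ f.support) (hm1 : 2 ≤ m 1)
    (hmax : ∀ n ∈ f.support, n ≠ m → n 0 + N * n 1 < m 0 + N * m 1) :
    weightedLeadingForm (yHeavyWeight N) (map (algebraMap K L) (Fpoly f d)) =
      fpolyTerm f d m := by
  have hT : (fpolyTerm f d m : MvPolynomial (Fin 5) L) ≠ 0 := fun h0 =>
    not_X_sub_X_sq_dvd_fpolyTerm (L := L) d (mem_support_iff.1 hm) (by lia) (h0 ▸ dvd_zero _)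
  have hlt : ∀ (a : MvPolynomial (Fin 5) L) (k : ℕ), k < 1 + m 0 + N * m 1 →
      Polynomial.C a * Polynomial.X ^ k ∈
        Polynomial.degreeLT (MvPolynomial (Fin 5) L) (1 + m 0 + N * m 1) := fun a k hk =>
    Polynomial.mem_degreeLT.2
      ((Polynomial.degree_C_mul_X_pow_le k a).trans_lt (by exact_mod_cast hk))
  rw [weightedLeadingForm_apply, weightScale_map_Fpoly, ← Finset.sum_erase_add _ _ hm,
    ← add_assoc, Polynomial.leadingCoeff_add_of_degree_lt, Polynomial.leadingCoeff_C_mul_X_pow]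
  rw [Polynomial.degree_C_mul_X_pow _ hT, ← Polynomial.mem_degreeLT]
  refine Submodule.add_mem _ (hlt _ _ ?_) (Submodule.sum_mem _ fun n hn => hlt _ _ ?_)
  · nlinarith [Nat.mul_le_mul_left N hm1]
  · have := hmax n (Finset.mem_of_mem_erase hn) (Finset.ne_of_mem_erase hn)
    lia

end Fpoly

/-- A polynomial with a monomial of `Y`-degree at least `2` has a strictly heaviest monomial when
`Y` is heavy enough, and that monomial has `Y`-degree at least `2`. -/
theorem exists_heaviest_monomial {K : Type*} [Field K] {f : MvPolynomial (Fin 2) K}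
    (hex : ∃ n ∈ f.support, 2 ≤ n 1) :
    ∃ m ∈ f.support, 2 ≤ m 1 ∧ ∀ n ∈ f.support, n ≠ m →
      n 0 + (f.totalDegree + 1) * n 1 < m 0 + (f.totalDegree + 1) * m 1 := by
  have hdeg : ∀ n ∈ f.support, n 0 ≤ f.totalDegree := fun n hn =>
    (le_degreeOf_of_mem_support 0 hn).trans (degreeOf_le_totalDegree f 0)
  obtain ⟨n₀, hn₀, hn₀1⟩ := hex
  obtain ⟨m, hm, hmax⟩ := f.support.exists_max_image
    (fun n => n 0 + (f.totalDegree + 1) * n 1) ⟨n₀, hn₀⟩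
  refine ⟨m, hm, ?_, fun n hn hne => (hmax n hn).lt_of_ne fun heq => hne ?_⟩
  · by_contra! hlt
    have h1 := hmax n₀ hn₀
    have h2 := hdeg m hm
    nlinarith
  · have h1 := hdeg m hm
    have h2 := hdeg n hn
    have hy : n 1 = m 1 := by
      rcases lt_trichotomy (n 1) (m 1) with h | h | h
      · nlinarith
      · exact h
      · nlinarith
    have hx : n 0 = m 0 := by
      rw [hy] at heq
      lia
    ext i
    fin_cases i
    · exact hx
    · exact hy

/-- If `j̄ = max{ j : a_{i,j} ≠ 0 for some i } > 1` (equivalently, some coefficient `a_{i,j}` with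
`j > 1` is nonzero), then `S_f` contains an absolutely irreducible component defined over `F_q`. -/
theorem statement2 (p h q : ℕ) (hp : p.Prime) (hh : 0 < h) (hq : q = p ^ h)
    (K : Type*) [Field K] [Fintype K] (hcard : Fintype.card K = q)
    (f : MvPolynomial (Fin 2) K) (d : ℕ) (hdeg : f.totalDegree = d) (hd : 1 ≤ d)
    (h00 : coeffXY f 0 0 = 0)
    (hex : ∃ i j : ℕ, 1 < j ∧ coeffXY f i j ≠ 0) :
    HasAbsIrrComponent (Fpoly f d) := by
  have hsupp : ∃ n ∈ f.support, 2 ≤ n 1 := by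
    obtain ⟨i, j, hj, hij⟩ := hex
    exact ⟨_, mem_support_iff.2 hij, by simpa using Nat.succ_le_of_lt hj⟩
  obtain ⟨m, hm, hm1, hmax⟩ := exists_heaviest_monomial hsupp
  let L := AlgebraicClosure K
  let τ := weightedLeadingForm (L := L) (yHeavyWeight (f.totalDegree + 1))
  have hlead : τ (map (algebraMap K L) (Fpoly f d)) = fpolyTerm f d m :=
    weightedLeadingForm_map_Fpoly hm hm1 hmax
  have hsq : ¬ (X 1 - X 3) * (X 1 - X 3) ∣ τ (map (algebraMap K L) (Fpoly f d)) := by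
    rw [hlead]
    exact not_X_sub_X_sq_dvd_fpolyTerm d (mem_support_iff.1 hm) (by lia)
  have hFL : map (algebraMap K L) (Fpoly f d) ≠ 0 := fun h0 => by
    rw [h0, weightedLeadingForm_apply, map_zero, Polynomial.leadingCoeff_zero] at hsq
    exact hsq (dvd_zero _)
  obtain ⟨P, hP, hPF, hπP⟩ := exists_irreducible_dvd_of_prime_dvd_map τ
    (prime_X_sub_X (by decide : (1 : Fin 5) ≠ 3)) hFL (hlead ▸ dvd_mul_right _ _)
  obtain ⟨g, hgF, hg⟩ := exists_dvd_irreducible_map_of_forall_associated hP hPF fun s => by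
    let e := mapEquiv (Fin 5) (s : L ≃+* L)
    refine associated_of_dvd_map_of_not_sq_dvd τ hsq hP
      ((MulEquiv.irreducible_iff e).2 hP) hPF ?_ hπP ?_
    · have h := map_dvd (map (s : L →+* L)) hPF
      rwa [map_map, show (s : L →+* L).comp (algebraMap K L) = algebraMap K L from
        RingHom.ext fun x => s.commutes x] at h
    · have h := map_dvd (map (s : L →+* L)) hπP
      rw [← weightedLeadingForm_map, map_sub, map_X, map_X] at h
      exact h
  refine ⟨g, hgF, Nat.pos_of_ne_zero fun h0 => ?_, hg⟩
  rw [totalDegree_eq_zero_iff_eq_C.1 h0, map_C] at hg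
  exact hg.not_isUnit ((IsUnit.mk0 _ fun hc => hg.ne_zero (by rw [hc, C_0])).map C)
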